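/- For every integer k ≥ 3, if G is a C_{2k}-free graph with Δ(G) ≥ 1, then the strong clique number of G is at most (2k−1)(4Δ(G)+1)/3. -/

import Mathlib

/-- A strong clique of `G`: a set of edges of `G` such that every pair of edges
either shares an endpoint or is joined by an edge of `G`. -/
def IsStrongClique {V : Type*} (G : SimpleGraph V) (S : Set (Sym2 V)) : Prop :=
  S ⊆ G.edgeSet ∧
    ∀ e ∈ S, ∀ f ∈ S, ∃ a b, a ∈ e ∧ b ∈ f ∧ (a = b ∨ G.Adj a b)

/-- `G` contains no cycle of length `n`. -/
def CycleFree {V : Type*} (G : SimpleGraph V) (n : ℕ) : Prop :=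
  ∀ (v : V) (c : G.Walk v v), c.IsCycle → c.length ≠ n

/-!
A strong clique `S` in a `C₂ₖ`-free graph contains no matching of `2k` edges. Indeed, any two edges
of such a matching are linked by an edge of `G`; choosing one link for each pair, a cyclic
arrangement of some of the matching edges traces out a cycle of `G`, which has one vertex on a
matching edge if the incoming and outgoing links use the same end, and both its ends otherwise. For
six matching edges a finite search finds an arrangement tracing out a hexagon, and one of at least
five edges tracing out a hexagon or an octagon. From there the length grows by two at a time: take
an arrangement with the greatest number of matching edges tracing out a cycle of length `n`. At most
`n` matching edges are used, so while `n + 2` are available two of them are free, and a second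
finite search shows that three consecutive edges can be replaced by three or more of themselves and
the two free ones so that the length grows by two, or stays the same with more matching edges used;
the latter is excluded.

Hence the largest matching in `S` has at most `2k - 1` edges, and the bound on `|S|` is the theorem
of Chvátal and Hanson on graphs with given maximum degree and matching number. It is proved by
deleting vertices covered by every maximum matching, until there are none. Then, by Gallai's lemma,
a maximum matching leaves at most one vertex of each component uncovered, so a component with `j`
matching edges has at most `2j + 1` vertices.
-/

open scoped Finset

/-! ### Lists -/

theorem perm_append_diff_comm {α : Type*} [BEq α] [LawfulBEq α] (l₁ l₂ : List α) :
    (l₁ ++ l₂.diff l₁).Perm (l₂ ++ l₁.diff l₂) := by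
  refine List.perm_iff_count.2 fun a => ?_
  simp only [List.count_append, List.count_diff]
  omega

theorem subperm_map {α β : Type*} (σ : α → β) {l₁ l₂ : List α} (h : l₁.Subperm l₂) :
    (l₁.map σ).Subperm (l₂.map σ) :=
  have ⟨t, hperm, hsub⟩ := h
  ⟨t.map σ, hperm.map σ, hsub.map σ⟩

theorem nodup_of_subperm {α : Type*} {l₁ l₂ : List α} (h : l₁.Subperm l₂) (hl : l₂.Nodup) :
    l₁.Nodup :=
  have ⟨_, hperm, hsub⟩ := h
  hperm.nodup_iff.1 (hl.sublist hsub)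

theorem map_getD_range {α : Type*} (l : List α) (a : α) :
    (List.range l.length).map (l.getD · a) = l :=
  List.ext_getElem (by simp) fun i _ hi => by simp [hi]

-- Read cyclically, `a, u` precede `x, y, z` and `v, b` follow; for five entries the pairs coincide.
theorem exists_eq_append_of_five_le_length {α : Type*} :
    ∀ {l : List α}, 5 ≤ l.length → ∃ v b t w a u x y z,
      l = v :: b :: t ++ [x, y, z] ∧ v :: b :: t = w ++ [a, u]
  | [v, b, x, y, z], _ => ⟨v, b, [], [], v, b, x, y, z, rfl, rfl⟩
  | v :: b :: c :: d :: e :: f :: l, _ => by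
    obtain ⟨_, _, t, w, a, u, x, y, z, hl, hw⟩ :=
      exists_eq_append_of_five_le_length (l := b :: c :: d :: e :: f :: l) (by simp)
    obtain ⟨rfl, rfl, _⟩ : _ := by simpa using hl
    exact ⟨v, _, _ :: t, v :: w, a, u, x, y, z, congrArg (v :: ·) hl, congrArg (v :: ·) hw⟩

/-- The orderings of the sublists of `l` that have at least `k` entries: the ways to visit at least
`k` of the entries of `l`, each at most once. -/
def arrangements {α : Type*} (k : ℕ) (l : List α) : List (List α) :=
  (l.sublists'.filter (k ≤ ·.length)).flatMap List.permutations'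

theorem mem_arrangements {α : Type*} {k : ℕ} {l s : List α} :
    s ∈ arrangements k l ↔ s.Subperm l ∧ k ≤ s.length := by
  simp only [arrangements, List.mem_flatMap, List.mem_filter, List.mem_sublists',
    decide_eq_true_eq, List.mem_permutations', List.Subperm]
  constructor
  · rintro ⟨t, ⟨hsub, hlen⟩, hperm⟩
    exact ⟨⟨t, hperm.symm, hsub⟩, hperm.length_eq ▸ hlen⟩
  · rintro ⟨⟨t, hperm, hsub⟩, hlen⟩
    exact ⟨t, ⟨hsub, hperm.length_eq ▸ hlen⟩, hperm.symm⟩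

/-! ### Link colourings -/

/-- A choice of links between the members of a family of two-ended objects, the ends being labelled
by `Bool`: `c i j` is the end of `i` at which the link between `i` and `j` attaches. The diagonal
values `c i i` are never used. -/
abbrev LinkColouring (ι : Type*) := ι → ι → Bool

namespace LinkColouring

/-- The triples of consecutive entries of a list: an arrangement passes through the middle entry of
each triple, coming from the first and leaving towards the last. -/
def passes {α : Type*} : List α → List (α × α × α)
  | p :: x :: q :: l => (p, x, q) :: passes (x :: q :: l)
  | _ => []

theorem passes_map {α β : Type*} (σ : α → β) :
    ∀ l : List α, passes (l.map σ) = (passes l).map (Prod.map σ (Prod.map σ σ))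
  | _ :: x :: q :: l => congrArg _ (passes_map σ (x :: q :: l))
  | [] | [_] | [_, _] => rfl

theorem passes_append {α : Type*} (x y : α) (t : List α) :
    ∀ l : List α, passes (l ++ x :: y :: t) = passes (l ++ [x, y]) ++ passes (x :: y :: t)
  | [] => rfl
  | [_] => rfl
  | [_, _] => rfl
  | _ :: q :: r :: l => congrArg _ (passes_append x y t (q :: r :: l))

theorem map_passes_middle {α : Type*} (p q : α) : ∀ l : List α,
    (passes (p :: (l ++ [q]))).map (·.2.1) = l
  | [] => rfl
  | [_] => rfl
  | x :: y :: l => congrArg _ (map_passes_middle x q (y :: l))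

section Lengths
variable {ι κ : Type*} (c : LinkColouring ι)

/-- The number of ends visited in a pass: one if the incoming and the outgoing link attach to the
same end, and two otherwise. -/
def passLength (t : ι × ι × ι) : ℕ := (c t.2.1 t.1 ^^ c t.2.1 t.2.2).toNat + 1

/-- The number of ends visited along an arrangement, not counting its first and last entries. -/
def pathLength (l : List ι) : ℕ := ((passes l).map c.passLength).sum

/-- The number of ends visited along `l` read cyclically, which is the length of the cycle traced
out. Repeating the first two entries makes every entry the middle of exactly one pass, provided
that there are at least two. -/
def cycleLength (l : List ι) : ℕ := c.pathLength (l ++ l.take 2)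

/-- The colouring induced along a map of index types, which need not be injective. -/
def comap (σ : κ → ι) : LinkColouring κ := fun x y => c (σ x) (σ y)

theorem pathLength_map (σ : κ → ι) (l : List κ) :
    c.pathLength (l.map σ) = (c.comap σ).pathLength l := by
  rw [pathLength, passes_map, List.map_map]; rfl

theorem cycleLength_map (σ : κ → ι) (l : List κ) :
    c.cycleLength (l.map σ) = (c.comap σ).cycleLength l := by
  rw [cycleLength, cycleLength, ← pathLength_map, List.map_append, List.map_take]

theorem pathLength_append (x y : ι) (l t : List ι) :
    c.pathLength (l ++ x :: y :: t) = c.pathLength (l ++ [x, y]) + c.pathLength (x :: y :: t) := by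
  rw [pathLength, passes_append, List.map_append, List.sum_append]; rfl

theorem cycleLength_splice {a u v b : ι} {t w : List ι} (hw : v :: b :: t = w ++ [a, u])
    (xs ys : List ι) :
    c.cycleLength (v :: b :: t ++ ys) + c.pathLength (a :: u :: (xs ++ [v, b])) =
      c.cycleLength (v :: b :: t ++ xs) + c.pathLength (a :: u :: (ys ++ [v, b])) := by
  have key (zs : List ι) : c.cycleLength (v :: b :: t ++ zs) =
      c.pathLength (v :: b :: t) + c.pathLength (a :: u :: (zs ++ [v, b])) := by
    have hzs : v :: b :: t ++ zs ++ (v :: b :: t ++ zs).take 2 = w ++ a :: u :: (zs ++ [v, b]) := by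
      simpa using congrArg (· ++ (zs ++ [v, b])) hw
    rw [cycleLength, hzs, pathLength_append, hw]
  rw [key, key, add_right_comm]

theorem map_passes_cycle_middle (a b : ι) (t : List ι) :
    (passes (a :: b :: t ++ [a, b])).map (·.2.1) = b :: t ++ [a] := by
  simpa using map_passes_middle a b (b :: t ++ [a])

theorem length_le_cycleLength : ∀ {l : List ι}, 2 ≤ l.length → l.length ≤ c.cycleLength l
  | a :: b :: t, _ => by
    have h := congrArg List.length (map_passes_cycle_middle a b t)
    have hsum := List.card_nsmul_le_sum ((passes (a :: b :: t ++ [a, b])).map c.passLength) 1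
      (List.forall_mem_map.2 fun _ _ => Nat.le_add_left _ _)
    simp only [List.length_map, List.length_append, List.length_cons, List.length_nil, smul_eq_mul]
      at h hsum ⊢
    exact le_trans (by omega) hsum

end Lengths

end LinkColouring

/-! ### Cycles traced out by arrangements of disjoint edges -/

theorem exists_isCycle_of_isChain {V : Type*} {G : SimpleGraph V} {l : List V} (hlen : 3 ≤ l.length)
    (hnodup : l.Nodup) (hchain : l.IsChain G.Adj)
    (hclose : ∀ x ∈ l.getLast?, ∀ y ∈ l.head?, G.Adj x y) :
    ∃ (v : V) (c : G.Walk v v), c.IsCycle ∧ c.length = l.length := by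
  have hne : l ≠ [] := List.ne_nil_of_length_pos (by omega)
  let w := SimpleGraph.Walk.ofSupport l hne hchain
  have hpath : w.IsPath := by
    rwa [SimpleGraph.Walk.isPath_def, SimpleGraph.Walk.support_ofSupport]
  have hw : w.length = l.length - 1 := SimpleGraph.Walk.length_ofSupport hne hchain
  have hadj : G.Adj (l.getLast hne) (l.head hne) :=
    hclose _ (List.getLast?_eq_getLast_of_ne_nil hne) _ (List.head?_eq_some_head hne)
  refine ⟨_, SimpleGraph.Walk.cons hadj w, ?_, by rw [SimpleGraph.Walk.length_cons]; omega⟩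
  refine SimpleGraph.Walk.cons_isCycle_iff _ _ |>.2 ⟨hpath, fun hmem => ?_⟩
  have := hpath.length_eq_one_of_mem_edges (Sym2.eq_swap ▸ hmem)
  omega

/-- The vertices `v i false` and `v i true` are the ends of pairwise disjoint edges of `G`, and the
links chosen by `c` are edges of `G`. -/
structure LinkColouring.IsRealisedBy {ι V : Type*} (c : LinkColouring ι) (G : SimpleGraph V)
    (v : ι → Bool → V) : Prop where
  injective : ∀ ⦃i j a b⦄, v i a = v j b → i = j ∧ a = b
  adj_self : ∀ i, G.Adj (v i false) (v i true)
  adj : ∀ ⦃i j⦄, i ≠ j → G.Adj (v i (c i j)) (v j (c j i))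

namespace LinkColouring

section Realisation
variable {ι V : Type*} {c : LinkColouring ι} {G : SimpleGraph V} {v : ι → Bool → V}

/-- The ends visited in a pass, as vertices in the order of the visit. -/
def passVertices (c : LinkColouring ι) (v : ι → Bool → V) (t : ι × ι × ι) : List V :=
  if c t.2.1 t.1 = c t.2.1 t.2.2 then [v t.2.1 (c t.2.1 t.1)]
  else [v t.2.1 (c t.2.1 t.1), v t.2.1 (c t.2.1 t.2.2)]

theorem length_passVertices (t : ι × ι × ι) : (c.passVertices v t).length = c.passLength t := by
  unfold passVertices passLength
  cases c t.2.1 t.1 <;> cases c t.2.1 t.2.2 <;> rfl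

theorem head?_passVertices (t : ι × ι × ι) :
    (c.passVertices v t).head? = some (v t.2.1 (c t.2.1 t.1)) := by
  unfold passVertices; split <;> rfl

theorem getLast?_passVertices (t : ι × ι × ι) :
    (c.passVertices v t).getLast? = some (v t.2.1 (c t.2.1 t.2.2)) := by
  unfold passVertices; split <;> simp [*]

theorem exists_eq_of_mem_passVertices {t : ι × ι × ι} {x : V} (hx : x ∈ c.passVertices v t) :
    ∃ a, x = v t.2.1 a := by
  unfold passVertices at hx; split at hx <;> grind

namespace IsRealisedBy
variable (h : c.IsRealisedBy G v)
include h

theorem isChain_passVertices (t : ι × ι × ι) : (c.passVertices v t).IsChain G.Adj := by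
  unfold passVertices
  cases c t.2.1 t.1 <;> cases c t.2.1 t.2.2 <;> simp [h.adj_self, (h.adj_self _).symm]

theorem nodup_passVertices (t : ι × ι × ι) : (c.passVertices v t).Nodup := by
  unfold passVertices
  split
  · exact List.nodup_singleton _
  · simpa using fun heq => ‹¬_› (h.injective heq).2

theorem isChain_flatMap_passVertices : ∀ {l : List ι}, l.IsChain (· ≠ ·) →
    ((passes l).flatMap (c.passVertices v)).IsChain G.Adj
  | p :: x :: q :: r :: l, hl => by
    simp only [List.isChain_cons_cons] at hl
    have ih := isChain_flatMap_passVertices (l := x :: q :: r :: l) (by simp [hl])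
    rw [passes, List.flatMap_cons]
    refine List.isChain_append.2 ⟨h.isChain_passVertices _, ih, ?_⟩
    rw [getLast?_passVertices, passes, List.flatMap_cons, List.head?_append, head?_passVertices]
    rintro _ ⟨⟩ _ ⟨⟩
    exact h.adj hl.2.1
  | [p, x, q], _ => by simpa [passes] using h.isChain_passVertices (p, x, q)
  | [] , _ | [_], _ | [_, _], _ => List.IsChain.nil

theorem nodup_flatMap_passVertices {L : List (ι × ι × ι)} (hL : (L.map (·.2.1)).Nodup) :
    (L.flatMap (c.passVertices v)).Nodup := by
  refine List.nodup_flatMap.2 ⟨fun t _ => h.nodup_passVertices t, (List.pairwise_map.1 hL).imp ?_⟩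
  intro s t hst x hxs hxt
  obtain ⟨a, rfl⟩ := exists_eq_of_mem_passVertices hxs
  obtain ⟨b, hab⟩ := exists_eq_of_mem_passVertices hxt
  exact hst (h.injective hab).1

theorem exists_isCycle {l : List ι} (hlen : 3 ≤ l.length) (hl : l.Nodup) :
    ∃ (x : V) (w : G.Walk x x), w.IsCycle ∧ w.length = c.cycleLength l := by
  obtain ⟨a, b, t, z, rfl⟩ : ∃ a b t z, l = a :: b :: (t ++ [z]) := by
    match l, hlen with
    | a :: b :: d :: t, _ =>
      exact ⟨a, b, (d :: t).dropLast, (d :: t).getLast (List.cons_ne_nil _ _),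
        by rw [List.dropLast_append_getLast]⟩
  set L := passes (a :: b :: (t ++ [z]) ++ [a, b]) with hL
  have hlength : (L.flatMap (c.passVertices v)).length = c.cycleLength (a :: b :: (t ++ [z])) := by
    simp [List.length_flatMap, length_passVertices, cycleLength, pathLength, hL]
  have hmiddle : L.map (·.2.1) = b :: (t ++ [z]) ++ [a] := map_passes_cycle_middle a b _
  have hlast : L = passes (a :: b :: t ++ [z, a]) ++ [(z, a, b)] := by
    rw [show [(z, a, b)] = passes [z, a, b] from rfl, ← passes_append, hL]
    simp only [List.cons_append, List.append_assoc, List.nil_append]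
  obtain ⟨d, L', hfirst⟩ : ∃ d L', L = (a, b, d) :: L' := by cases t <;> exact ⟨_, _, rfl⟩
  have hab : a ≠ b := fun hab => (List.nodup_cons.1 hl).1 (by simp [hab])
  rw [← hlength]
  refine exists_isCycle_of_isChain ?_ (h.nodup_flatMap_passVertices ?_)
    (h.isChain_flatMap_passVertices ?_) ?_
  · rw [hlength]
    exact hlen.trans (c.length_le_cycleLength (by simp))
  · rw [hmiddle]
    exact (List.perm_append_singleton a (b :: (t ++ [z]))).nodup_iff.2 hl
  · refine List.isChain_append.2 ⟨hl.isChain, by simpa using hab, ?_⟩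
    grind
  · nth_rw 1 [hlast]
    rw [hfirst, List.flatMap_append, List.flatMap_singleton, List.flatMap_cons,
      List.getLast?_append, List.head?_append, head?_passVertices, getLast?_passVertices]
    rintro _ ⟨⟩ _ ⟨⟩
    exact h.adj hab

end IsRealisedBy

theorem exists_isRealisedBy {V : Type*} {G : SimpleGraph V} {v : ι → Bool → V}
    (hinj : ∀ ⦃i j a b⦄, v i a = v j b → i = j ∧ a = b) (hself : ∀ i, G.Adj (v i false) (v i true))
    (hlink : ∀ i j, i ≠ j → ∃ a b, G.Adj (v i a) (v j b)) :
    ∃ c : LinkColouring ι, c.IsRealisedBy G v := by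
  obtain ⟨_, _⟩ := exists_wellFoundedLT ι
  choose! A B hAB using hlink
  refine ⟨fun i j => if i < j then A i j else B j i, hinj, hself, fun i j hij => ?_⟩
  rcases hij.lt_or_gt with h | h
  · simpa [h, h.not_gt] using hAB i j hij
  · simpa [h, h.not_gt] using (hAB j i hij.symm).symm

end Realisation

/-! ### Unavoidable lengths -/

/-- The condition that the total weight of `plus` exceeds that of `minus` by exactly `gain`, where a
pair of bit positions weighs two if the two bits differ and one if they agree. The bits record a
link colouring, through `relative`. -/
structure Equation where
  plus : List (ℕ × ℕ)
  minus : List (ℕ × ℕ)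
  gain : ℕ

/-- A proposed change of a path, from `old` to `new`, that is to lengthen it by exactly `gain`. -/
structure Candidate where
  new : List ℕ
  old : List ℕ
  gain : ℕ

/-- The pairs of links that meet in the given passes; the link of `x` towards `y` is numbered
`Nat.pair x y`. -/
def linkPairs (L : List (ℕ × ℕ × ℕ)) : List (ℕ × ℕ) :=
  L.map fun t => (Nat.pair t.2.1 t.1, Nat.pair t.2.1 t.2.2)

/-- The condition on a colouring for the candidate to have the desired gain. The passes common to
both paths are cancelled, so that it depends on as few links as possible. -/
def Candidate.toEquation (d : Candidate) : Equation where
  plus := linkPairs ((passes d.new).diff (passes d.old))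
  minus := linkPairs ((passes d.old).diff (passes d.new))
  gain := d.gain

/-- The total weight of `l` plus `n`, the bits being those of `m`. It is computed by arithmetic on
natural numbers, which the kernel evaluates natively. -/
def weight (m : ℕ) (l : List (ℕ × ℕ)) (n : ℕ) : ℕ :=
  l.foldr (fun p n => n + ((m >>> p.1 ^^^ m >>> p.2) % 2 + 1)) n

namespace Equation

/-- The evaluation of an equation at the bits of `m`. -/
def holds (m : ℕ) (e : Equation) : Bool :=
  Nat.beq (weight m e.plus 0) (weight m e.minus e.gain)

/-- Whether an equation involves only bits at positions in `known`. -/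
def decidedBy (known : List ℕ) (e : Equation) : Bool :=
  (e.plus ++ e.minus).all fun p => known.contains p.1 && known.contains p.2

/-- The plan of a search that fixes the bits in the order `order`, those in `known` being already
fixed: each stage is the value `2 ^ b` of the bit `b` to be fixed and the equations that become
decided with it. -/
def schedule : List Equation → List ℕ → List ℕ → List (ℕ × List Equation)
  | _, _, [] => []
  | es, known, b :: order =>
    (2 ^ b, es.filter (decidedBy (b :: known))) ::
      schedule (es.filter fun e => !e.decidedBy (b :: known)) (b :: known) order

/-- Whether every assignment of the remaining bits, those fixed so far being the bits of `m`,
satisfies some scheduled equation. Both values of each bit are explored, and a branch stops at the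
first equation that holds. -/
def search : List (ℕ × List Equation) → ℕ → Bool
  | [], _ => false
  | (b, es) :: stages, m =>
    (es.any (holds m) || search stages m) && (es.any (holds (m ||| b)) || search stages (m ||| b))

end Equation

/-- The total weight of `l` for the bits `f`. -/
def pairWeight (f : ℕ → Bool) (l : List (ℕ × ℕ)) : ℕ :=
  (l.map fun p => (f p.1 ^^ f p.2).toNat + 1).sum

theorem weight_eq_pairWeight_add {m : ℕ} {f : ℕ → Bool} (l : List (ℕ × ℕ)) (n : ℕ)
    (hm : ∀ p ∈ l, m.testBit p.1 = f p.1 ∧ m.testBit p.2 = f p.2) :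
    weight m l n = pairWeight f l + n := by
  induction l with
  | nil => exact (Nat.zero_add n).symm
  | cons p l ih =>
    have hbit : (m >>> p.1 ^^^ m >>> p.2) % 2 = (f p.1 ^^ f p.2).toNat := by
      rw [← (hm p List.mem_cons_self).1, ← (hm p List.mem_cons_self).2]
      simpa only [Nat.pow_zero, Nat.div_one, Nat.testBit_xor, Nat.testBit_shiftRight, Nat.add_zero]
        using (Nat.toNat_testBit (m >>> p.1 ^^^ m >>> p.2) 0).symm
    have ih' := ih fun q hq => hm q (List.mem_cons_of_mem _ hq)
    simp only [weight, pairWeight, List.foldr_cons, List.map_cons, List.sum_cons] at ih' ⊢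
    rw [ih', hbit]
    ring

namespace Equation

theorem pairWeight_of_holds {m : ℕ} {f : ℕ → Bool} {known : List ℕ} {e : Equation}
    (hm : ∀ b ∈ known, m.testBit b = f b) (hdecided : e.decidedBy known) (hholds : e.holds m) :
    pairWeight f e.plus = pairWeight f e.minus + e.gain := by
  simp only [decidedBy, List.all_eq_true, List.mem_append, Bool.and_eq_true,
    List.contains_iff_mem] at hdecided
  have hbits (p) (hp : p ∈ e.plus ∨ p ∈ e.minus) :
      m.testBit p.1 = f p.1 ∧ m.testBit p.2 = f p.2 :=
    ⟨hm _ (hdecided p hp).1, hm _ (hdecided p hp).2⟩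
  have := Nat.eq_of_beq_eq_true hholds
  rwa [weight_eq_pairWeight_add _ _ fun p hp => hbits p (.inl hp),
    weight_eq_pairWeight_add _ _ fun p hp => hbits p (.inr hp)] at this

theorem exists_of_search (f : ℕ → Bool) (order : List ℕ) (es : List Equation) (known : List ℕ)
    (m : ℕ) (hm : ∀ b, m.testBit b = (decide (b ∈ known) && f b))
    (hsearch : search (schedule es known order) m) :
    ∃ e ∈ es, pairWeight f e.plus = pairWeight f e.minus + e.gain := by
  induction order generalizing es known m with
  | nil => cases hsearch
  | cons b order ih =>
    obtain ⟨m', hm', hbranch⟩ : ∃ m', (∀ a, m'.testBit a = (decide (a ∈ b :: known) && f a)) ∧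
        ((es.filter (decidedBy (b :: known))).any (holds m') ∨
          search (schedule (es.filter fun e => !e.decidedBy (b :: known)) (b :: known) order)
            m') := by
      simp only [schedule, search, Bool.and_eq_true, Bool.or_eq_true] at hsearch
      cases hb : f b
      · refine ⟨m, fun a => ?_, hsearch.1⟩
        rw [hm]; grind
      · refine ⟨m ||| 2 ^ b, fun a => ?_, hsearch.2⟩
        rw [Nat.testBit_or, hm, Nat.testBit_two_pow]; grind
    rcases hbranch with hany | hrest
    · obtain ⟨e, he, hholds⟩ := List.any_eq_true.1 hany
      obtain ⟨he, hdecided⟩ := List.mem_filter.1 he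
      exact ⟨e, he, pairWeight_of_holds (fun a ha => by simp [hm', ha]) hdecided hholds⟩
    · obtain ⟨e, he, heq⟩ := ih _ _ m' hm' hrest
      exact ⟨e, List.mem_of_mem_filter he, heq⟩

end Equation

/-- A sufficient test for every link colouring to admit one of the candidates `ds`. Swapping the two
ends of `x` changes no length, so links at `x` are compared to the link towards `ref[x]`, whose bit
is zero; `order` lists the other links in the order of the search. -/
def unavoidable (ds : List Candidate) (ref : List ℕ) (order : List (ℕ × ℕ)) : Bool :=
  Equation.search (Equation.schedule (ds.map Candidate.toEquation)
    ((List.range ref.length).map fun x => Nat.pair x (ref.getD x 0))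
    (order.map fun p => Nat.pair p.1 p.2)) 0

/-- The bits of a colouring as seen by `unavoidable`: whether a link at `x` attaches to the other
end of `x` than the link towards `ref[x]` does. The numbering of links is that of `linkPairs`. -/
def relative (c : LinkColouring ℕ) (ref : List ℕ) (b : ℕ) : Bool :=
  c b.unpair.1 b.unpair.2 ^^ c b.unpair.1 (ref.getD b.unpair.1 0)

theorem pairWeight_linkPairs (c : LinkColouring ℕ) (ref : List ℕ) (L : List (ℕ × ℕ × ℕ)) :
    pairWeight (c.relative ref) (linkPairs L) = (L.map c.passLength).sum := by
  rw [pairWeight, linkPairs, List.map_map]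
  congr 2
  ext t
  simp only [Function.comp_apply, relative, passLength, Nat.unpair_pair]
  cases c t.2.1 (ref.getD t.2.1 0) <;> simp

theorem exists_pathLength_eq_of_unavoidable {ds : List Candidate} {ref : List ℕ}
    {order : List (ℕ × ℕ)} (h : unavoidable ds ref order) (c : LinkColouring ℕ) :
    ∃ d ∈ ds, c.pathLength d.new = c.pathLength d.old + d.gain := by
  obtain ⟨_, he, heq⟩ := Equation.exists_of_search (c.relative ref) _ _ _ 0
    (fun b => by
      rw [Nat.zero_testBit, eq_comm, Bool.and_eq_false_iff, decide_eq_false_iff_not,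
        or_iff_not_imp_left, not_not]
      intro hb
      obtain ⟨x, _, rfl⟩ := List.mem_map.1 hb
      simp [relative]) h
  obtain ⟨d, hd, rfl⟩ := List.mem_map.1 he
  simp only [Candidate.toEquation, pairWeight_linkPairs] at heq
  have hperm := ((perm_append_diff_comm (passes d.new) (passes d.old)).map c.passLength).sum_eq
  simp only [List.map_append, List.sum_append] at hperm
  exact ⟨d, hd, by unfold pathLength; omega⟩

/-! ### Cycles of every even length -/

/-- The cyclic arrangements of at least `k` of six objects, to be of a length in `gains`. A cyclic
arrangement is represented by the reading that begins at the least entry, in the direction of the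
smaller of its two neighbours. -/
def cycleCandidates (k : ℕ) (gains : List ℕ) : List Candidate :=
  ((arrangements k (List.range 6)).filter
    fun l => l.all (l.headI ≤ ·) && l.tail.headI ≤ l.getLastI).flatMap
    fun l => gains.map fun g => ⟨l ++ l.take 2, [], g⟩

/-- The replacements of `2, 3, 4` in a stretch `0, 1, 2, 3, 4, 5, 6` of a cyclic arrangement by
three or more of these and the unused objects `7` and `8`. The gain `0` is allowed only if the
arrangement becomes longer. -/
def detourCandidates : List Candidate :=
  (arrangements 3 [2, 3, 4, 7, 8]).flatMap fun ys =>
    (if ys.length = 3 then [2] else [2, 0]).map fun g =>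
      ⟨0 :: 1 :: (ys ++ [5, 6]), [0, 1, 2, 3, 4, 5, 6], g⟩

-- The references and orders below were found by computer; another order would only change how
-- much of the decision tree is explored.
theorem unavoidable_hexagon : unavoidable (cycleCandidates 3 [6]) [1, 0, 0, 0, 0, 0]
    [(0, 2), (1, 2), (2, 1), (0, 3), (1, 3), (3, 1), (2, 3), (3, 2), (0, 4), (1, 4), (4, 1), (2, 4),
      (4, 2), (3, 4), (4, 3), (0, 5), (1, 5), (5, 1), (2, 5), (5, 2), (3, 5), (5, 3), (4, 5),
      (5, 4)] := by
  decide +kernel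

theorem unavoidable_hexagon_or_octagon : unavoidable (cycleCandidates 5 [6, 8]) [4, 0, 1, 2, 3, 0]
    [(1, 2), (2, 3), (4, 0), (3, 4), (0, 1), (0, 2), (1, 3), (2, 0), (3, 1), (1, 4), (4, 1), (0, 5),
      (1, 5), (5, 1), (2, 5), (5, 2), (3, 5), (5, 3), (2, 4), (4, 2), (5, 4), (0, 3), (3, 0),
      (4, 5)] := by
  decide +kernel

theorem unavoidable_detour : unavoidable detourCandidates [1, 0, 1, 2, 3, 4, 0, 1, 1]
    [(1, 2), (1, 7), (1, 8), (2, 3), (2, 7), (7, 2), (2, 8), (8, 2), (3, 4), (3, 7), (7, 3), (3, 8),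
      (8, 3), (4, 5), (4, 7), (7, 4), (4, 8), (8, 4), (5, 6), (5, 7), (7, 5), (5, 8), (8, 5),
      (1, 3), (3, 1), (2, 4), (4, 2), (3, 5), (5, 3)] := by
  decide +kernel

section CycleLengths
variable {ι : Type*} (c : LinkColouring ι)

theorem exists_cycleLength_mem {k : ℕ} {gains ref : List ℕ} {order : List (ℕ × ℕ)}
    (h : unavoidable (cycleCandidates k gains) ref order) {l : List ι} (hlen : l.length = 6) :
    ∃ s : List ι, s.Subperm l ∧ k ≤ s.length ∧ c.cycleLength s ∈ gains := by
  have hne : l ≠ [] := List.ne_nil_of_length_pos (by omega)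
  let σ (x : ℕ) : ι := l.getD x (l.head hne)
  obtain ⟨d, hd, heq⟩ := exists_pathLength_eq_of_unavoidable h (c.comap σ)
  simp only [cycleCandidates, List.mem_flatMap, List.mem_filter, List.mem_map] at hd
  obtain ⟨s, ⟨hs, _⟩, g, hg, rfl⟩ := hd
  obtain ⟨hsub, hk⟩ := mem_arrangements.1 hs
  refine ⟨s.map σ, ?_, by rwa [List.length_map], ?_⟩
  · have := subperm_map σ hsub
    rwa [← hlen, map_getD_range] at this
  · rw [cycleLength_map, cycleLength, heq]
    exact (Nat.zero_add g).symm ▸ hg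

theorem exists_detour (a u x y z v b e f : ι) :
    ∃ ys : List ι, ys.Subperm [x, y, z, e, f] ∧ 3 ≤ ys.length ∧
      (c.pathLength (a :: u :: (ys ++ [v, b])) = c.pathLength [a, u, x, y, z, v, b] + 2 ∨
        3 < ys.length ∧
          c.pathLength (a :: u :: (ys ++ [v, b])) = c.pathLength [a, u, x, y, z, v, b]) := by
  let σ (i : ℕ) : ι := [a, u, x, y, z, v, b, e, f].getD i a
  obtain ⟨d, hd, heq⟩ := exists_pathLength_eq_of_unavoidable unavoidable_detour (c.comap σ)
  simp only [detourCandidates, List.mem_flatMap, List.mem_map] at hd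
  obtain ⟨ys, hys, g, hg, rfl⟩ := hd
  obtain ⟨hsub, hlen⟩ := mem_arrangements.1 hys
  rw [← pathLength_map, ← pathLength_map] at heq
  have hpath : c.pathLength (a :: u :: (ys.map σ ++ [v, b])) =
      c.pathLength [a, u, x, y, z, v, b] + g := by
    simpa [σ] using heq
  refine ⟨ys.map σ, subperm_map σ hsub, by rwa [List.length_map], ?_⟩
  rw [hpath, List.length_map]
  grind

theorem exists_longer_or_cycleLength_add_two [Fintype ι] {n : ℕ} (hcard : n + 2 ≤ Fintype.card ι)
    {l : List ι} (hl : l.Nodup) (hlen : 5 ≤ l.length) (hcycle : c.cycleLength l = n) :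
    ∃ s : List ι, s.Nodup ∧ 5 ≤ s.length ∧
      (c.cycleLength s = n + 2 ∨ l.length < s.length ∧ c.cycleLength s = n) := by
  classical
  have hle : l.length ≤ n := hcycle ▸ c.length_le_cycleLength (by omega)
  obtain ⟨e, he, f, hf, hef⟩ : ∃ e ∉ l, ∃ f ∉ l, e ≠ f := by
    have : 1 < l.toFinsetᶜ.card := by
      rw [Finset.card_compl, List.toFinset_card_of_nodup hl]
      omega
    simpa using Finset.one_lt_card.1 this
  obtain ⟨v, b, t, w, a, u, x, y, z, rfl, hw⟩ := exists_eq_append_of_five_le_length hlen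
  obtain ⟨ys, hsub, hys, hgain⟩ := c.exists_detour a u x y z v b e f
  have hsplice := c.cycleLength_splice hw [x, y, z] ys
  rw [hcycle] at hsplice
  refine ⟨v :: b :: t ++ ys, ?_, ?_, ?_⟩
  · refine nodup_of_subperm ((List.subperm_append_left (l₂ := [x, y, z] ++ [e, f]) _).2 hsub) ?_
    rw [← List.append_assoc]
    exact hl.append (by simpa using hef) (by simp_all)
  · simp only [List.length_append, List.length_cons]
    simp only [List.length_append, List.length_cons, List.length_nil] at hlen
    omega
  · refine hgain.imp (fun hgain => ?_) fun ⟨hlong, hgain⟩ => ⟨?_, ?_⟩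
    · rw [hgain] at hsplice
      exact Nat.add_right_cancel (m := c.pathLength [a, u, x, y, z, v, b])
        (hsplice.trans (by ring))
    · simpa using hlong
    · rw [hgain] at hsplice
      exact Nat.add_right_cancel hsplice

theorem exists_cycleLength_add_two [Fintype ι] {n : ℕ} (hcard : n + 2 ≤ Fintype.card ι)
    {l : List ι} (hl : l.Nodup) (hlen : 5 ≤ l.length) (hcycle : c.cycleLength l = n) :
    ∃ s : List ι, s.Nodup ∧ 5 ≤ s.length ∧ c.cycleLength s = n + 2 := by
  obtain ⟨s, hs, hslen, hadd | ⟨hlonger, heq⟩⟩ :=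
    c.exists_longer_or_cycleLength_add_two hcard hl hlen hcycle
  · exact ⟨s, hs, hslen, hadd⟩
  · have : Fintype.card ι - s.length < Fintype.card ι - l.length :=
      Nat.sub_lt_sub_left (hlonger.trans_le hs.length_le_card) hlonger
    exact exists_cycleLength_add_two hcard hs hslen heq
termination_by Fintype.card ι - l.length

theorem exists_cycleLength_eq_two_mul [Fintype ι] {k : ℕ} (hk : 3 ≤ k)
    (hcard : 2 * k ≤ Fintype.card ι) :
    ∃ l : List ι, l.Nodup ∧ 3 ≤ l.length ∧ c.cycleLength l = 2 * k := by
  obtain ⟨l, hl, hlen⟩ : ∃ l : List ι, l.Nodup ∧ l.length = 6 := by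
    obtain ⟨A, hA⟩ := Finset.exists_subset_card_eq (s := (Finset.univ : Finset ι)) (n := 6)
      (by rw [Finset.card_univ]; omega)
    exact ⟨A.toList, A.nodup_toList, by rw [A.length_toList, hA.2]⟩
  obtain rfl | hk := hk.eq_or_lt
  · obtain ⟨s, hs, hslen, hcycle⟩ := c.exists_cycleLength_mem unavoidable_hexagon hlen
    exact ⟨s, nodup_of_subperm hs hl, hslen, List.mem_singleton.1 hcycle⟩
  suffices ∃ s : List ι, s.Nodup ∧ 5 ≤ s.length ∧ c.cycleLength s = 2 * k by
    obtain ⟨s, hs, hslen, hcycle⟩ := this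
    exact ⟨s, hs, by omega, hcycle⟩
  induction k, hk using Nat.le_induction with
  | base =>
    obtain ⟨s, hs, hslen, hcycle⟩ := c.exists_cycleLength_mem unavoidable_hexagon_or_octagon hlen
    have hs := nodup_of_subperm hs hl
    rcases List.mem_pair.1 hcycle with hcycle | hcycle
    · exact c.exists_cycleLength_add_two (by omega) hs hslen hcycle
    · exact ⟨s, hs, hslen, hcycle⟩
  | succ k _ ih =>
    obtain ⟨s, hs, hslen, hcycle⟩ := ih (by omega) (by omega)
    exact c.exists_cycleLength_add_two (by omega) hs hslen hcycle

end CycleLengths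

end LinkColouring

/-! ### The theorem of Chvátal and Hanson -/

/-- A matching, as a set of edges no two of which share an endpoint. -/
def IsMatching {V : Type*} (M : Finset (Sym2 V)) : Prop :=
  ∀ ⦃e⦄, e ∈ M → ∀ ⦃f⦄, f ∈ M → ∀ ⦃x⦄, x ∈ e → x ∈ f → e = f

theorem IsMatching.subset {V : Type*} {M N : Finset (Sym2 V)} (hM : IsMatching M) (h : N ⊆ M) :
    IsMatching N :=
  fun _ he _ hf => hM (h he) (h hf)

/-- A matching in `S` with the greatest possible number of edges. -/
structure IsMaximumMatching {V : Type*} (S M : Finset (Sym2 V)) : Prop where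
  subset : M ⊆ S
  isMatching : IsMatching M
  card_le : ∀ ⦃N⦄, N ⊆ S → IsMatching N → N.card ≤ M.card

theorem exists_isMaximumMatching {V : Type*} (S : Finset (Sym2 V)) :
    ∃ M, IsMaximumMatching S M := by
  classical
  obtain ⟨M, hM, hmax⟩ := (S.powerset.filter IsMatching).exists_max_image Finset.card
    ⟨∅, by simp [IsMatching]⟩
  simp only [Finset.mem_filter, Finset.mem_powerset] at hM hmax
  exact ⟨M, hM.1, hM.2, fun N hN hN' => hmax N ⟨hN, hN'⟩⟩

namespace IsMaximumMatching
variable {V : Type*} {S M N : Finset (Sym2 V)}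

theorem of_card_eq (hM : IsMaximumMatching S M) (hN : N ⊆ S) (hN' : IsMatching N)
    (hcard : N.card = M.card) : IsMaximumMatching S N :=
  ⟨hN, hN', fun _ h h' => hcard ▸ hM.card_le h h'⟩

theorem card_eq (hM : IsMaximumMatching S M) (hN : IsMaximumMatching S N) : M.card = N.card :=
  (hN.card_le hM.subset hM.isMatching).antisymm (hM.card_le hN.subset hN.isMatching)

end IsMaximumMatching

/-- The connected component containing an edge of the graph with edge set `S`; for `e ∉ S` it is
the component of an arbitrary endpoint. -/
noncomputable def componentOf {V : Type*} (S : Finset (Sym2 V)) (e : Sym2 V) :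
    (SimpleGraph.fromEdgeSet (S : Set (Sym2 V))).ConnectedComponent :=
  SimpleGraph.connectedComponentMk _ e.out.1

theorem connectedComponentMk_eq_componentOf {V : Type*} {S : Finset (Sym2 V)} {e : Sym2 V}
    (he : e ∈ S) {x : V} (hx : x ∈ e) : SimpleGraph.connectedComponentMk _ x = componentOf S e := by
  refine SimpleGraph.ConnectedComponent.sound ?_
  obtain rfl | hne := eq_or_ne x e.out.1
  · rfl
  · refine SimpleGraph.Adj.reachable ((SimpleGraph.fromEdgeSet_adj _).2 ⟨?_, hne⟩)
    rwa [← (Sym2.mem_and_mem_iff hne).1 ⟨hx, e.out_fst_mem⟩]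

/-- The greatest number of edges of a graph with maximum degree at most `D` and no matching of more
than `m` edges. -/
def chvatalHansonBound (D m : ℕ) : ℕ := m * D + D / 2 * (m / ((D + 1) / 2))

theorem chvatalHansonBound_mono (D : ℕ) : Monotone (chvatalHansonBound D) := fun _ _ h =>
  Nat.add_le_add (Nat.mul_le_mul_right _ h) (Nat.mul_le_mul_left _ (Nat.div_le_div_right h))

theorem chvatalHansonBound_add_le (D m n : ℕ) :
    chvatalHansonBound D m + chvatalHansonBound D n ≤ chvatalHansonBound D (m + n) := by
  have := Nat.mul_le_mul_left (D / 2)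
    (Nat.div_add_div_le_add_div (x := m) (y := n) (z := (D + 1) / 2))
  simp only [chvatalHansonBound]
  linarith

theorem sum_chvatalHansonBound_le {α : Type*} (D : ℕ) (s : Finset α) (m : α → ℕ) :
    ∑ i ∈ s, chvatalHansonBound D (m i) ≤ chvatalHansonBound D (∑ i ∈ s, m i) := by
  classical
  induction s using Finset.induction with
  | empty => simp
  | insert i s hi ih =>
    rw [Finset.sum_insert hi, Finset.sum_insert hi]
    exact (Nat.add_le_add_left ih _).trans (chvatalHansonBound_add_le _ _ _)

theorem three_mul_chvatalHansonBound_le (D m : ℕ) :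
    3 * chvatalHansonBound D m ≤ m * (4 * D + 1) := by
  have hfloor : 3 * (D / 2 * (m / ((D + 1) / 2))) ≤ m * (D + 1) := by
    obtain hD | hD := lt_or_ge D 2
    · simp [Nat.div_eq_of_lt hD]
    · calc 3 * (D / 2 * (m / ((D + 1) / 2))) ≤ 3 * ((D + 1) / 2 * (m / ((D + 1) / 2))) := by
            gcongr; exact D.le_succ
        _ ≤ 3 * m := Nat.mul_le_mul_left 3 (Nat.mul_div_le _ _)
        _ ≤ m * (D + 1) := by rw [mul_comm]; gcongr; omega
  unfold chvatalHansonBound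
  linarith

theorem le_chvatalHansonBound {t D m : ℕ} (hdeg : 2 * t ≤ (2 * m + 1) * D)
    (hpairs : t ≤ (2 * m + 1).choose 2) : t ≤ chvatalHansonBound D m := by
  unfold chvatalHansonBound
  obtain hm | hm := lt_or_ge m ((D + 1) / 2)
  · have hchoose : (2 * m + 1).choose 2 = m * (2 * m + 1) := by
      rw [Nat.choose_two_right, Nat.add_sub_cancel, mul_left_comm,
        Nat.mul_div_cancel_left _ two_pos, mul_comm]
    calc t ≤ m * (2 * m + 1) := hchoose ▸ hpairs
      _ ≤ m * D := Nat.mul_le_mul_left m (by omega)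
      _ ≤ _ := Nat.le_add_right _ _
  · have hhalf : t ≤ m * D + D / 2 := by
      rw [add_mul, one_mul, mul_assoc] at hdeg
      omega
    obtain rfl | hD := D.eq_zero_or_pos
    · simpa using hhalf
    · exact hhalf.trans (Nat.add_le_add_left
        (Nat.le_mul_of_pos_right _ (Nat.div_pos hm (by omega))) _)

section Endpoints
variable {V : Type*} [DecidableEq V]

/-- The vertices covered by a set of edges. -/
def endpoints (S : Finset (Sym2 V)) : Finset V := S.biUnion Sym2.toFinset

theorem mem_endpoints {S : Finset (Sym2 V)} {x : V} : x ∈ endpoints S ↔ ∃ e ∈ S, x ∈ e := by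
  simp [endpoints]

theorem endpoints_mono {S T : Finset (Sym2 V)} (h : S ⊆ T) : endpoints S ⊆ endpoints T :=
  Finset.biUnion_subset_biUnion_of_subset_left _ h

namespace IsMatching
variable {M N : Finset (Sym2 V)} {e : Sym2 V} {x : V}

theorem insert (hM : IsMatching M) (he : ∀ x ∈ e, x ∉ endpoints M) : IsMatching (insert e M) := by
  intro f hf g hg x hxf hxg
  simp only [mem_endpoints, not_exists, not_and] at he
  rcases Finset.mem_insert.1 hf with rfl | hfM <;> rcases Finset.mem_insert.1 hg with rfl | hgM
  · rfl
  · exact (he x hxf g hgM hxg).elim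
  · exact (he x hxg f hfM hxf).elim
  · exact hM hfM hgM hxf hxg

theorem notMem_endpoints_erase (hM : IsMatching M) (he : e ∈ M) (hx : x ∈ e) :
    x ∉ endpoints (M.erase e) := fun h =>
  have ⟨_, hf, hxf⟩ := mem_endpoints.1 h
  Finset.ne_of_mem_erase hf (hM (Finset.mem_of_mem_erase hf) he hxf hx)

theorem card_endpoints (hM : IsMatching M) (hloop : ∀ e ∈ M, ¬ e.IsDiag) :
    (endpoints M).card = 2 * M.card := by
  rw [endpoints, Finset.card_biUnion fun e he f hf hef => Finset.disjoint_left.2 fun x hxe hxf =>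
      hef (hM he hf (Sym2.mem_toFinset.1 hxe) (Sym2.mem_toFinset.1 hxf)),
    Finset.sum_congr rfl fun e he => Sym2.card_toFinset_of_not_isDiag e (hloop e he),
    Finset.sum_const, smul_eq_mul, mul_comm]

end IsMatching

namespace IsMaximumMatching
variable {S M N : Finset (Sym2 V)} {u v t : V}

theorem exists_mem_endpoints (hM : IsMaximumMatching S M) {e : Sym2 V} (he : e ∈ S) :
    ∃ x ∈ e, x ∈ endpoints M := by
  by_contra! hfree
  have heM : e ∉ M := fun h =>
    hfree _ e.out_fst_mem (mem_endpoints.2 ⟨e, h, e.out_fst_mem⟩)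
  have := hM.card_le (Finset.insert_subset he hM.subset) (hM.isMatching.insert hfree)
  rw [Finset.card_insert_of_notMem heM] at this
  omega

theorem exists_ne_mem_endpoints (hloop : ∀ e ∈ S, ¬ e.IsDiag) (hM : IsMaximumMatching S M)
    (hN : IsMaximumMatching S N) (huv : u ≠ v) (huM : u ∉ endpoints M) (hvM : v ∉ endpoints M)
    (huN : u ∈ endpoints N) (hvN : v ∈ endpoints N) (t : V) :
    ∃ x ≠ t, x ∈ endpoints M ∧ x ∉ endpoints N := by
  have hcard : (endpoints M).card = (endpoints N).card := by
    rw [hM.isMatching.card_endpoints fun e he => hloop e (hM.subset he),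
      hN.isMatching.card_endpoints fun e he => hloop e (hN.subset he), hM.card_eq hN]
  have htwo : 1 < (endpoints N \ endpoints M).card :=
    Finset.one_lt_card.2 ⟨u, by simp [huM, huN], v, by simp [hvM, hvN], huv⟩
  obtain ⟨x, hx, hxt⟩ := Finset.exists_mem_ne (Finset.card_sdiff_comm hcard ▸ htwo) t
  exact ⟨x, hxt, Finset.mem_sdiff.1 hx⟩

theorem exists_card_inter_lt (hloop : ∀ e ∈ S, ¬ e.IsDiag) (hM : IsMaximumMatching S M)
    (hN : IsMaximumMatching S N) (huv : u ≠ v) (huM : u ∉ endpoints M) (hvM : v ∉ endpoints M)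
    (huN : u ∈ endpoints N) (hvN : v ∈ endpoints N) (htN : t ∉ endpoints N) :
    ∃ N', IsMaximumMatching S N' ∧ t ∉ endpoints N' ∧ (M ∩ N).card < (M ∩ N').card := by
  obtain ⟨x, hxt, hxM, hxN⟩ := exists_ne_mem_endpoints hloop hM hN huv huM hvM huN hvN t
  obtain ⟨e, heM, hxe⟩ := mem_endpoints.1 hxM
  obtain ⟨y, rfl⟩ := Sym2.mem_iff_exists.1 hxe
  have hyN : y ∈ endpoints N := by
    obtain ⟨z, hz, hzN⟩ := hN.exists_mem_endpoints (hM.subset heM)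
    rcases Sym2.mem_iff.1 hz with rfl | rfl
    · exact (hxN hzN).elim
    · exact hzN
  obtain ⟨f, hfN, hyf⟩ := mem_endpoints.1 hyN
  have hxyN : s(x, y) ∉ N := fun h => hxN (mem_endpoints.2 ⟨_, h, Sym2.mem_mk_left x y⟩)
  have hfM : f ∉ M := fun h =>
    hxyN (hM.isMatching heM h (Sym2.mem_mk_right x y) hyf ▸ hfN)
  have herase : endpoints (N.erase f) ⊆ endpoints N := endpoints_mono (N.erase_subset f)
  refine ⟨insert s(x, y) (N.erase f), hN.of_card_eq ?_ ?_ ?_, ?_, Finset.card_lt_card ?_⟩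
  · exact Finset.insert_subset (hM.subset heM) ((N.erase_subset f).trans hN.subset)
  · refine (hN.isMatching.subset (N.erase_subset f)).insert fun z hz => ?_
    rcases Sym2.mem_iff.1 hz with rfl | rfl
    · exact fun h => hxN (herase h)
    · exact hN.isMatching.notMem_endpoints_erase hfN hyf
  · rw [Finset.card_insert_of_notMem fun h => hxyN (Finset.mem_of_mem_erase h),
      Finset.card_erase_add_one hfN]
  · have hty : t ≠ y := fun h => htN (h ▸ hyN)
    rw [endpoints, Finset.biUnion_insert, Finset.mem_union, not_or]
    exact ⟨by simp [hxt.symm, hty], fun h => htN (herase h)⟩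
  · refine (Finset.ssubset_iff_of_subset fun g hg => ?_).2 ⟨s(x, y), by simp [heM, hxyN]⟩
    have hgf : g ≠ f := by rintro rfl; exact hfM (Finset.mem_inter.1 hg).1
    simp_all

theorem exists_notMem_endpoints_of_avoids (hloop : ∀ e ∈ S, ¬ e.IsDiag)
    (hM : IsMaximumMatching S M) (huv : u ≠ v) (huM : u ∉ endpoints M) (hvM : v ∉ endpoints M)
    (ht : ∃ N, IsMaximumMatching S N ∧ t ∉ endpoints N) :
    ∃ N, IsMaximumMatching S N ∧ t ∉ endpoints N ∧ (u ∉ endpoints N ∨ v ∉ endpoints N) := by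
  by_contra! hcov
  have hunbounded (n : ℕ) : ∃ N, IsMaximumMatching S N ∧ t ∉ endpoints N ∧ n ≤ (M ∩ N).card := by
    induction n with
    | zero => simpa using ht
    | succ n ih =>
      obtain ⟨N, hN, htN, hn⟩ := ih
      obtain ⟨huN, hvN⟩ := hcov N hN htN
      obtain ⟨N', hN', htN', hlt⟩ :=
        exists_card_inter_lt hloop hM hN huv huM hvM huN hvN htN
      exact ⟨N', hN', htN', hn.trans_lt hlt⟩
  obtain ⟨N, -, -, hN⟩ := hunbounded (M.card + 1)
  have := Finset.card_le_card (Finset.inter_subset_left (s₁ := M) (s₂ := N))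
  omega

theorem mem_endpoints_or_mem_endpoints (hloop : ∀ e ∈ S, ¬ e.IsDiag)
    (havoid : ∀ t, ∃ N, IsMaximumMatching S N ∧ t ∉ endpoints N)
    (huv : u ≠ v) (hreach : (SimpleGraph.fromEdgeSet (S : Set (Sym2 V))).Reachable u v)
    (hM : IsMaximumMatching S M) : u ∈ endpoints M ∨ v ∈ endpoints M := by
  obtain ⟨p⟩ := hreach
  induction p generalizing M with
  | nil => exact (huv rfl).elim
  | @cons u t v hadj p ih =>
    have hedge {N} (hN : IsMaximumMatching S N) : u ∈ endpoints N ∨ t ∈ endpoints N := by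
      obtain ⟨x, hx, hxN⟩ := hN.exists_mem_endpoints ((SimpleGraph.fromEdgeSet_adj _).1 hadj).1
      rcases Sym2.mem_iff.1 hx with rfl | rfl
      exacts [.inl hxN, .inr hxN]
    obtain rfl | htv := eq_or_ne t v
    · exact hedge hM
    by_contra! hfree
    obtain ⟨N, hN, htN, huN | hvN⟩ :=
      exists_notMem_endpoints_of_avoids hloop hM huv hfree.1 hfree.2 (havoid t)
    · exact (hedge hN).elim huN htN
    · exact (ih htv hN).elim htN hvN

end IsMaximumMatching

theorem two_mul_card_le_card_endpoints_mul {T : Finset (Sym2 V)} {D : ℕ}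
    (hloop : ∀ e ∈ T, ¬ e.IsDiag) (hdeg : ∀ v, #{e ∈ T | v ∈ e} ≤ D) :
    2 * T.card ≤ (endpoints T).card * D := by
  have hsum := Finset.sum_card_bipartiteAbove_eq_sum_card_bipartiteBelow (s := endpoints T) (t := T)
    (fun v e => v ∈ e)
  have hbelow (e) (he : e ∈ T) : #((endpoints T).bipartiteBelow (fun v e => v ∈ e) e) = 2 := by
    rw [← Sym2.card_toFinset_of_not_isDiag e (hloop e he)]
    congr 1
    ext x
    simpa [Finset.bipartiteBelow] using fun hx => mem_endpoints.2 ⟨e, he, hx⟩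
  rw [Finset.sum_congr rfl hbelow, Finset.sum_const, smul_eq_mul, mul_comm] at hsum
  rw [← hsum]
  exact Finset.sum_le_card_nsmul _ _ _ fun v _ => hdeg v

theorem card_le_choose_card_endpoints {T : Finset (Sym2 V)} (hloop : ∀ e ∈ T, ¬ e.IsDiag) :
    T.card ≤ (endpoints T).card.choose 2 := by
  rw [← Sym2.card_image_offDiag]
  refine Finset.card_le_card fun e he => ?_
  induction e with | _ x y
  refine Finset.mem_image.2 ⟨(x, y), Finset.mem_offDiag.2 ⟨?_, ?_, ?_⟩, rfl⟩
  · exact mem_endpoints.2 ⟨_, he, Sym2.mem_mk_left x y⟩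
  · exact mem_endpoints.2 ⟨_, he, Sym2.mem_mk_right x y⟩
  · exact hloop _ he

theorem card_le_chvatalHansonBound_of_card_endpoints_le {T : Finset (Sym2 V)} {D m : ℕ}
    (hloop : ∀ e ∈ T, ¬ e.IsDiag) (hdeg : ∀ v, #{e ∈ T | v ∈ e} ≤ D)
    (hcard : (endpoints T).card ≤ 2 * m + 1) : T.card ≤ chvatalHansonBound D m :=
  le_chvatalHansonBound
    ((two_mul_card_le_card_endpoints_mul hloop hdeg).trans (Nat.mul_le_mul_right D hcard))
    ((card_le_choose_card_endpoints hloop).trans (Nat.choose_le_choose 2 hcard))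

open scoped Classical in
theorem card_endpoints_filter_componentOf_le {S M : Finset (Sym2 V)}
    (hloop : ∀ e ∈ S, ¬ e.IsDiag) (havoid : ∀ t, ∃ N, IsMaximumMatching S N ∧ t ∉ endpoints N)
    (hM : IsMaximumMatching S M)
    (C : (SimpleGraph.fromEdgeSet (S : Set (Sym2 V))).ConnectedComponent) :
    (endpoints {e ∈ S | componentOf S e = C}).card ≤
      2 * #{e ∈ M | componentOf S e = C} + 1 := by
  set T := {e ∈ S | componentOf S e = C}
  set M' := {e ∈ M | componentOf S e = C}
  have hcomponent {x} (hx : x ∈ endpoints T) : SimpleGraph.connectedComponentMk _ x = C := by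
    obtain ⟨e, he, hxe⟩ := mem_endpoints.1 hx
    obtain ⟨heS, heC⟩ := Finset.mem_filter.1 he
    exact (connectedComponentMk_eq_componentOf heS hxe).trans heC
  have hmem {x} (hx : x ∈ endpoints T) (hxM : x ∈ endpoints M) : x ∈ endpoints M' := by
    obtain ⟨e, he, hxe⟩ := mem_endpoints.1 hxM
    refine mem_endpoints.2 ⟨e, Finset.mem_filter.2 ⟨he, ?_⟩, hxe⟩
    rw [← connectedComponentMk_eq_componentOf (hM.subset he) hxe, hcomponent hx]
  have hone : (endpoints T \ endpoints M').card ≤ 1 := by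
    refine Finset.card_le_one.2 fun x hx y hy => by_contra fun hxy => ?_
    rw [Finset.mem_sdiff] at hx hy
    have hreach := SimpleGraph.ConnectedComponent.exact
      ((hcomponent hx.1).trans (hcomponent hy.1).symm)
    obtain h | h := hM.mem_endpoints_or_mem_endpoints hloop havoid hxy hreach
    · exact hx.2 (hmem hx.1 h)
    · exact hy.2 (hmem hy.1 h)
  have hMM' : M' ⊆ M := M.filter_subset _
  have htwo : (endpoints M').card = 2 * M'.card :=
    (hM.isMatching.subset hMM').card_endpoints fun e he => hloop e (hM.subset (hMM' he))
  have := Finset.card_le_card_sdiff_add_card (s := endpoints T) (t := endpoints M')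
  omega

theorem card_le_chvatalHansonBound_of_avoids {S M : Finset (Sym2 V)} {D : ℕ}
    (hloop : ∀ e ∈ S, ¬ e.IsDiag) (hdeg : ∀ v, #{e ∈ S | v ∈ e} ≤ D)
    (havoid : ∀ t, ∃ N, IsMaximumMatching S N ∧ t ∉ endpoints N)
    (hM : IsMaximumMatching S M) : S.card ≤ chvatalHansonBound D M.card := by
  classical
  have hcomponent (C) : #{e ∈ S | componentOf S e = C} ≤
      chvatalHansonBound D #{e ∈ M | componentOf S e = C} :=
    have hsub : {e ∈ S | componentOf S e = C} ⊆ S := S.filter_subset _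
    card_le_chvatalHansonBound_of_card_endpoints_le (fun e he => hloop e (hsub he))
      (fun v => (Finset.card_le_card (Finset.filter_subset_filter _ hsub)).trans (hdeg v))
      (card_endpoints_filter_componentOf_le hloop havoid hM C)
  calc S.card = ∑ C ∈ S.image (componentOf S), #{e ∈ S | componentOf S e = C} :=
        Finset.card_eq_sum_card_image _ _
    _ ≤ ∑ C ∈ S.image (componentOf S),
          chvatalHansonBound D #{e ∈ M | componentOf S e = C} :=
        Finset.sum_le_sum fun C _ => hcomponent C
    _ ≤ chvatalHansonBound D
          (∑ C ∈ S.image (componentOf S), #{e ∈ M | componentOf S e = C}) :=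
        sum_chvatalHansonBound_le _ _ _
    _ = chvatalHansonBound D M.card :=
        congrArg _ (Finset.card_eq_sum_card_fiberwise fun e he =>
          Finset.mem_image_of_mem _ (hM.subset he)).symm

theorem card_le_chvatalHansonBound {D : ℕ} (S M : Finset (Sym2 V))
    (hloop : ∀ e ∈ S, ¬ e.IsDiag) (hdeg : ∀ v, #{e ∈ S | v ∈ e} ≤ D)
    (hM : IsMaximumMatching S M) : S.card ≤ chvatalHansonBound D M.card := by
  induction S using Finset.strongInduction generalizing M with | _ S ih
  by_cases havoid : ∀ t, ∃ N, IsMaximumMatching S N ∧ t ∉ endpoints N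
  · exact card_le_chvatalHansonBound_of_avoids hloop hdeg havoid hM
  push Not at havoid
  obtain ⟨v, hv⟩ := havoid
  obtain ⟨e, he, hve⟩ := mem_endpoints.1 (hv M hM)
  set S' := {e ∈ S | v ∉ e}
  have hsub : S' ⊆ S := S.filter_subset _
  obtain ⟨M', hM'⟩ := exists_isMaximumMatching S'
  have hlt : M'.card < M.card := by
    by_contra! hle
    have hmax := hM.of_card_eq (hM'.subset.trans hsub) hM'.isMatching
      ((hM.card_le (hM'.subset.trans hsub) hM'.isMatching).antisymm hle)
    obtain ⟨f, hf, hvf⟩ := mem_endpoints.1 (hv M' hmax)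
    exact (Finset.mem_filter.1 (hM'.subset hf)).2 hvf
  have hrest := ih S' (Finset.filter_ssubset.2 ⟨e, hM.subset he, not_not.2 hve⟩) M'
    (fun e he => hloop e (hsub he))
    (fun w => (Finset.card_le_card (Finset.filter_subset_filter _ hsub)).trans (hdeg w)) hM'
  calc S.card = #{e ∈ S | v ∈ e} + S'.card := (S.card_filter_add_card_filter_not _).symm
    _ ≤ chvatalHansonBound D 1 + chvatalHansonBound D M'.card :=
        Nat.add_le_add ((hdeg v).trans (by simp [chvatalHansonBound])) hrest
    _ ≤ chvatalHansonBound D (1 + M'.card) := chvatalHansonBound_add_le _ _ _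
    _ ≤ chvatalHansonBound D M.card := chvatalHansonBound_mono D (by omega)

end Endpoints

/-! ### Strong cliques -/

theorem IsStrongClique.subset {V : Type*} {G : SimpleGraph V} {S T : Set (Sym2 V)}
    (hS : IsStrongClique G S) (h : T ⊆ S) : IsStrongClique G T :=
  ⟨h.trans hS.1, fun e he f hf => hS.2 e (h he) f (h hf)⟩

theorem IsStrongClique.exists_isRealisedBy {V : Type*} {G : SimpleGraph V} {M : Finset (Sym2 V)}
    (hclique : IsStrongClique G M) (hM : IsMatching M) :
    ∃ (v : M → Bool → V) (c : LinkColouring M), c.IsRealisedBy G v := by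
  have hends (e : Sym2 V) : ∃ x y, e = s(x, y) := by
    induction e with | _ x y => exact ⟨x, y, rfl⟩
  choose x y hxy using fun e : M => hends e
  let v (e : M) (b : Bool) : V := cond b (y e) (x e)
  have hself (e : M) : G.Adj (v e false) (v e true) := by
    have := hclique.1 e.2
    rwa [hxy e] at this
  have hmem (e : M) (a : V) : a ∈ (e : Sym2 V) ↔ ∃ b, a = v e b := by
    simp [hxy e, v]
  refine ⟨v, LinkColouring.exists_isRealisedBy (fun e f a b hab => ?_) hself fun e f hef => ?_⟩
  · obtain rfl : e = f :=
      Subtype.ext (hM e.2 f.2 ((hmem e _).2 ⟨a, rfl⟩) ((hmem f _).2 ⟨b, hab⟩))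
    exact ⟨rfl, Bool.injective_iff.2 (hself e).ne hab⟩
  · obtain ⟨a, b, ha, hb, hab⟩ := hclique.2 e e.2 f f.2
    obtain ⟨i, rfl⟩ := (hmem e a).1 ha
    obtain ⟨j, rfl⟩ := (hmem f b).1 hb
    refine ⟨i, j, hab.resolve_left fun h => hef (Subtype.ext (hM e.2 f.2 ha (h ▸ hb)))⟩

theorem IsStrongClique.card_lt_of_isMatching {V : Type*} {G : SimpleGraph V} {k : ℕ} (hk : 3 ≤ k)
    (hG : CycleFree G (2 * k)) {M : Finset (Sym2 V)} (hclique : IsStrongClique G M)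
    (hM : IsMatching M) : M.card < 2 * k := by
  by_contra! hcard
  obtain ⟨v, c, hc⟩ := hclique.exists_isRealisedBy hM
  obtain ⟨l, hl, hlen, hcycle⟩ := c.exists_cycleLength_eq_two_mul hk (by rwa [Fintype.card_coe])
  obtain ⟨x, w, hw, hlength⟩ := hc.exists_isCycle hlen hl
  exact hG x w hw (hlength.trans hcycle)

theorem card_filter_mem_le_maxDegree {V : Type*} [Fintype V] [DecidableEq V] {G : SimpleGraph V}
    [DecidableRel G.Adj] {S : Finset (Sym2 V)} (hS : ↑S ⊆ G.edgeSet) (v : V) :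
    #{e ∈ S | v ∈ e} ≤ G.maxDegree :=
  calc #{e ∈ S | v ∈ e} ≤ (G.incidenceFinset v).card := Finset.card_le_card fun e he =>
        (G.mem_incidenceFinset v e).2
          ⟨hS (Finset.mem_filter.1 he).1, (Finset.mem_filter.1 he).2⟩
    _ = G.degree v := G.card_incidenceFinset_eq_degree v
    _ ≤ G.maxDegree := G.degree_le_maxDegree v

theorem stmt19_general {V : Type*} [DecidableEq V] {G : SimpleGraph V} {k D : ℕ} (hk : 3 ≤ k)
    (hG : CycleFree G (2 * k)) {S : Finset (Sym2 V)} (hS : IsStrongClique G ↑S)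
    (hD : ∀ v, #{e ∈ S | v ∈ e} ≤ D) :
    (S.card : ℚ) ≤ (2 * k - 1) * (4 * D + 1) / 3 := by
  obtain ⟨M, hM⟩ := exists_isMaximumMatching S
  have hmatching : (M.card : ℚ) + 1 ≤ 2 * k := mod_cast
    (hS.subset (Finset.coe_subset.2 hM.subset)).card_lt_of_isMatching hk hG hM.isMatching
  have hedges : 3 * (S.card : ℚ) ≤ M.card * (4 * D + 1) := mod_cast
    (Nat.mul_le_mul_left 3 (card_le_chvatalHansonBound S M
      (fun _ he => G.not_isDiag_of_mem_edgeSet (hS.1 he)) hD hM)).trans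
      (three_mul_chvatalHansonBound_le D M.card)
  rw [le_div_iff₀ three_pos, mul_comm]
  exact hedges.trans (mul_le_mul_of_nonneg_right (by linarith) (by positivity))

/-- For `k ≥ 3`, if `G` is a `C₂ₖ`-free graph with `Δ(G) ≥ 1`, then the strong clique
number of `G` is at most `(2k - 1)(4Δ(G) + 1) / 3`. -/
theorem stmt19 {V : Type*} [Fintype V] [DecidableEq V] (G : SimpleGraph V)
    [DecidableRel G.Adj] (k : ℕ) (hk : 3 ≤ k)
    (hc2k : CycleFree G (2 * k)) (hΔ : 1 ≤ G.maxDegree)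
    (S : Finset (Sym2 V)) (hS : IsStrongClique G ↑S) :
    (S.card : ℚ) ≤ (2 * k - 1) * (4 * G.maxDegree + 1) / 3 := by
  exact stmt19_general hk hc2k hS (card_filter_mem_le_maxDegree hS.1)
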